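/- Let 𝒯 be a rooted tree with vertex set V, and let q ∈ [0,1]. Then Σ_{A ⊆ V, A contains all vertices of some path in 𝒯 from the root to a leaf of 𝒯} q^{|A|} (1-q)^{|V| - |A|} = p[𝒯](q). Equivalently, if each vertex of 𝒯 is kept independently with probability q and deleted otherwise, the probability that some root-to-leaf path of 𝒯 has all of its vertices kept equals p[𝒯](q). -/

import Mathlib

/-- A rooted tree: a finite tree with a distinguished root vertex, given by the (ordered)
list of subtrees rooted at the children of the root. -/
inductive RTree : Type where
  | node : List RTree → RTree

namespace RTree

mutual
/-- The tree polynomial `p[𝒯] ∈ ℤ[x]`: `p = x` for a single vertex, and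
`p[𝒯] = x (1 − ∏ᵢ (1 − p[𝒯ᵢ]))` when the subtrees rooted at the children of the root are
`𝒯₁, …, 𝒯ᵣ`. -/
noncomputable def treePoly : RTree → Polynomial ℤ
  | .node [] => Polynomial.X
  | .node (t :: ts) => Polynomial.X * (1 - prodPoly (t :: ts))
  termination_by t => sizeOf t

/-- `∏ᵢ (1 − p[𝒯ᵢ])` over a list of trees. -/
noncomputable def prodPoly : List RTree → Polynomial ℤ
  | [] => 1
  | t :: ts => (1 - treePoly t) * prodPoly ts
  termination_by l => sizeOf l
end

mutual
/-- The set of vertex addresses of a rooted tree: a vertex is addressed by the list of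
child indices on the path from the root to it (so the root has address `[]`). -/
def vertexFinset : RTree → Finset (List ℕ)
  | .node ts => insert [] (childVerts ts 0)
  termination_by t => sizeOf t

def childVerts : List RTree → ℕ → Finset (List ℕ)
  | [], _ => ∅
  | t :: ts, i => (vertexFinset t).image (List.cons i) ∪ childVerts ts (i + 1)
  termination_by l _ => sizeOf l
end

mutual
/-- The subtree rooted at a given vertex address, if the address is valid. -/
def subtreeAt : RTree → List ℕ → Option RTree
  | t, [] => some t
  | .node ts, i :: l => subtreeAtAux ts i l
  termination_by t _ => sizeOf t

def subtreeAtAux : List RTree → ℕ → List ℕ → Option RTree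
  | [], _, _ => none
  | t :: _, 0, l => subtreeAt t l
  | _ :: ts, i + 1, l => subtreeAtAux ts i l
  termination_by l _ _ => sizeOf l
end

/-- Whether a tree consists of a single vertex (i.e. its root is a leaf). -/
def isLeafTree : RTree → Bool
  | .node [] => true
  | .node (_ :: _) => false

/-- The set of (addresses of) leaves of a rooted tree: vertices with no children. -/
def leafFinset (t : RTree) : Finset (List ℕ) :=
  (vertexFinset t).filter (fun l => (subtreeAt t l).any isLeafTree = true)

/-- The set of all prefixes of an address: the set of vertices of the path from the root
to the vertex with this address. -/
def prefixFinset (l : List ℕ) : Finset (List ℕ) :=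
  (Finset.range (l.length + 1)).image (fun k => l.take k)

end RTree

/-!
A root-to-leaf path of a tree with more than one vertex consists of the root followed by a
root-to-leaf path of one of the branches. Hence no path is kept exactly when the root is deleted or
every branch fails to keep a path. These events concern disjoint sets of vertices, so they are
independent, and the probability that some path is kept satisfies the recursion defining `p[𝒯]`.
-/

section BernoulliSubset

open Finset

variable {α β ι M R : Type*}

/-- The event `E` about subsets of `α` depends only on the part of the subset lying in `V`. -/
def IsDeterminedBy (E : Set (Set α)) (V : Set α) : Prop :=
  ∀ S, S ∩ V ∈ E ↔ S ∈ E

theorem isDeterminedBy_singleton (a : α) : IsDeterminedBy {S | a ∈ S} {a} := by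
  simp [IsDeterminedBy]

namespace IsDeterminedBy

variable {E : Set (Set α)} {U V : Set α}

theorem compl (hE : IsDeterminedBy E V) : IsDeterminedBy Eᶜ V :=
  fun S ↦ not_congr (hE S)

theorem mono (hE : IsDeterminedBy E U) (hUV : U ⊆ V) : IsDeterminedBy E V := fun S ↦ by
  rw [← hE (S ∩ V), Set.inter_assoc, Set.inter_eq_self_of_subset_right hUV, hE]

theorem biInter_finset [DecidableEq α] {s : Finset ι} {E : ι → Set (Set α)} {V : ι → Finset α}
    (hE : ∀ i ∈ s, IsDeterminedBy (E i) (V i)) :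
    IsDeterminedBy (⋂ i ∈ s, E i) (s.biUnion V) := fun S ↦ by
  simp only [Set.mem_iInter]
  exact forall₂_congr fun i hi ↦ (hE i hi).mono (mod_cast subset_biUnion_of_mem V hi) S

theorem preimage_preimage (hE : IsDeterminedBy E V) {f : α → β} (hf : f.Injective) :
    IsDeterminedBy (Set.preimage f ⁻¹' E) (f '' V) := fun S ↦ by
  simp only [Set.mem_preimage, Set.preimage_inter, hf.preimage_image, hE (f ⁻¹' S)]

end IsDeterminedBy

theorem union_inter_eq_left_of_disjoint [DecidableEq α] {A B U : Finset α} (hA : A ⊆ U)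
    (hB : Disjoint B U) : (A ∪ B) ∩ U = A := by
  rw [union_inter_distrib_right, inter_eq_left.mpr hA, disjoint_iff_inter_eq_empty.mp hB,
    union_empty]

theorem sum_powerset_union_of_disjoint [AddCommMonoid M] [DecidableEq α] {U V : Finset α}
    (hUV : Disjoint U V) (f : Finset α → M) :
    ∑ A ∈ (U ∪ V).powerset, f A = ∑ A ∈ U.powerset, ∑ B ∈ V.powerset, f (A ∪ B) := by
  rw [← sum_product']
  refine sum_nbij' (fun A ↦ (A ∩ U, A ∩ V)) (fun p ↦ p.1 ∪ p.2) ?_ ?_ ?_ ?_ ?_ <;>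
    simp only [mem_powerset, mem_product, Prod.forall, Prod.mk.injEq]
  · exact fun A _ ↦ ⟨inter_subset_right, inter_subset_right⟩
  · exact fun A B h ↦ union_subset_union h.1 h.2
  · exact fun A hA ↦ by rw [← inter_union_distrib_left, inter_eq_left.mpr hA]
  · intro A B ⟨hA, hB⟩
    exact ⟨union_inter_eq_left_of_disjoint hA (hUV.symm.mono_left hB),
      union_comm A B ▸ union_inter_eq_left_of_disjoint hB (hUV.mono_left hA)⟩
  · exact fun A hA ↦ by rw [← inter_union_distrib_left, inter_eq_left.mpr hA]

variable [CommRing R] (q : R)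

open scoped Classical in
/-- The probability that the random subset of `V` which keeps each element independently with
probability `q` satisfies the event `E`. The formula makes sense for `q` in any commutative ring. -/
noncomputable def bernoulliProb (V : Finset α) (E : Set (Set α)) : R :=
  ∑ A ∈ V.powerset, if (A : Set α) ∈ E then q ^ #A * (1 - q) ^ (#V - #A) else 0

theorem bernoulliProb_univ (V : Finset α) : bernoulliProb q V Set.univ = 1 := by
  simp [bernoulliProb, sum_pow_mul_eq_add_pow]

theorem bernoulliProb_compl (V : Finset α) (E : Set (Set α)) :
    bernoulliProb q V Eᶜ = 1 - bernoulliProb q V E := by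
  classical
  rw [eq_sub_iff_add_eq, ← bernoulliProb_univ q V]
  simp only [bernoulliProb, ← sum_add_distrib]
  refine sum_congr rfl fun A _ ↦ ?_
  by_cases hA : (A : Set α) ∈ E <;> simp [hA]

theorem bernoulliProb_singleton (a : α) : bernoulliProb q {a} {S | a ∈ S} = q := by
  classical
  rw [bernoulliProb, ← insert_empty_eq, sum_powerset_insert (notMem_empty a)]
  simp

theorem bernoulliProb_image [DecidableEq β] {f : α → β} (hf : f.Injective) (V : Finset α)
    (E : Set (Set α)) :
    bernoulliProb q (V.image f) (Set.preimage f ⁻¹' E) = bernoulliProb q V E := by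
  classical
  simp only [bernoulliProb, powerset_image, sum_image (image_injective hf).injOn,
    card_image_of_injective _ hf, Set.mem_preimage, coe_image, hf.preimage_image]

variable [DecidableEq α]

theorem bernoulliProb_union_inter {U V : Finset α} (hUV : Disjoint U V) {E F : Set (Set α)}
    (hE : IsDeterminedBy E U) (hF : IsDeterminedBy F V) :
    bernoulliProb q (U ∪ V) (E ∩ F) = bernoulliProb q U E * bernoulliProb q V F := by
  classical
  rw [bernoulliProb, sum_powerset_union_of_disjoint hUV, bernoulliProb, bernoulliProb,
    sum_mul_sum]
  refine sum_congr rfl fun A hA ↦ sum_congr rfl fun B hB ↦ ?_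
  rw [mem_powerset] at hA hB
  have restrict_left : (A ∪ B) ∩ U = A :=
    union_inter_eq_left_of_disjoint hA (hUV.symm.mono_left hB)
  have restrict_right : (A ∪ B) ∩ V = B :=
    union_comm A B ▸ union_inter_eq_left_of_disjoint hB (hUV.mono_left hA)
  have mem_inter_iff : (↑(A ∪ B) : Set α) ∈ E ∩ F ↔ (A : Set α) ∈ E ∧ (B : Set α) ∈ F := by
    rw [Set.mem_inter_iff, ← hE, ← hF, ← coe_inter, ← coe_inter, restrict_left, restrict_right]
  have card_deleted : #(U ∪ V) - #(A ∪ B) = (#U - #A) + (#V - #B) := by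
    have := card_le_card hA
    have := card_le_card hB
    rw [card_union_of_disjoint hUV, card_union_of_disjoint (hUV.mono hA hB)]
    omega
  rw [card_deleted, card_union_of_disjoint (hUV.mono hA hB), ite_zero_mul_ite_zero]
  simp only [mem_inter_iff]
  congr 1
  ring

theorem bernoulliProb_biUnion_iInter {s : Finset ι} {V : ι → Finset α}
    (hV : (s : Set ι).PairwiseDisjoint V) {E : ι → Set (Set α)}
    (hE : ∀ i ∈ s, IsDeterminedBy (E i) (V i)) :
    bernoulliProb q (s.biUnion V) (⋂ i ∈ s, E i) = ∏ i ∈ s, bernoulliProb q (V i) (E i) := by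
  classical
  induction s using Finset.induction_on with
  | empty => simp [bernoulliProb_univ]
  | insert a s ha ih =>
    have disjoint_rest : Disjoint (V a) (s.biUnion V) :=
      (disjoint_biUnion_right _ _ _).mpr fun i hi ↦
        hV (mem_insert_self a s) (mem_insert_of_mem hi) (ne_of_mem_of_not_mem hi ha).symm
    have hE_rest : ∀ i ∈ s, IsDeterminedBy (E i) (V i) := fun i hi ↦ hE i (mem_insert_of_mem hi)
    rw [biUnion_insert, set_biInter_insert, prod_insert ha,
      bernoulliProb_union_inter q disjoint_rest (hE a (mem_insert_self a s))
        (.biInter_finset hE_rest),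
      ih (hV.subset (coe_subset.mpr (subset_insert a s))) hE_rest]

end BernoulliSubset

namespace RTree

open Finset Polynomial

theorem prodPoly_eq_prod (ts : List RTree) :
    prodPoly ts = ∏ i : Fin ts.length, (1 - treePoly ts[i]) := by
  induction ts with
  | nil => simp [prodPoly]
  | cons t ts ih => simp [prodPoly, ih, Fin.prod_univ_succ]

theorem treePoly_node {ts : List RTree} (hts : ts ≠ []) :
    treePoly (node ts) = X * (1 - ∏ i : Fin ts.length, (1 - treePoly ts[i])) := by
  cases ts with
  | nil => contradiction
  | cons t ts => rw [treePoly, prodPoly_eq_prod]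

theorem childVerts_eq_biUnion (ts : List RTree) (k : ℕ) :
    childVerts ts k =
      univ.biUnion fun i : Fin ts.length ↦ (vertexFinset ts[i]).image (List.cons (k + i)) := by
  induction ts generalizing k with
  | nil => simp [childVerts]
  | cons t ts ih =>
    ext l
    simp [childVerts, ih, Fin.exists_fin_succ, add_assoc, add_comm 1]

theorem vertexFinset_node (ts : List RTree) :
    vertexFinset (node ts) =
      {[]} ∪ univ.biUnion fun i : Fin ts.length ↦ (vertexFinset ts[i]).image (List.cons ↑i) := by
  simp only [vertexFinset, childVerts_eq_biUnion, zero_add, insert_eq]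

theorem cons_mem_vertexFinset_node {ts : List RTree} {j : ℕ} {l : List ℕ} :
    j :: l ∈ vertexFinset (node ts) ↔ ∃ i : Fin ts.length, ↑i = j ∧ l ∈ vertexFinset ts[i] := by
  simp [vertexFinset_node, and_comm]

theorem nil_mem_vertexFinset : ∀ t : RTree, [] ∈ vertexFinset t
  | node ts => by simp [vertexFinset]

theorem mem_vertexFinset_of_prefix {l' l : List ℕ} (h : l' <+: l) {t : RTree}
    (hl : l ∈ vertexFinset t) : l' ∈ vertexFinset t := by
  induction l generalizing l' t with
  | nil => rwa [List.prefix_nil.mp h]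
  | cons j l ih =>
    obtain rfl | ⟨m, rfl, hm⟩ := List.prefix_cons_iff.mp h
    · exact nil_mem_vertexFinset t
    · cases t with | node ts =>
      obtain ⟨i, rfl, hi⟩ := cons_mem_vertexFinset_node.mp hl
      exact cons_mem_vertexFinset_node.mpr ⟨i, rfl, ih hm hi⟩

theorem subtreeAtAux_eq_subtreeAt_getElem (ts : List RTree) (i : Fin ts.length) (l : List ℕ) :
    subtreeAtAux ts i l = subtreeAt ts[i] l := by
  induction ts with
  | nil => exact i.elim0
  | cons t ts ih =>
    cases i using Fin.cases with
    | zero => simp [subtreeAtAux]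
    | succ i => simpa [subtreeAtAux] using ih i

theorem nil_mem_leafFinset_node {ts : List RTree} : [] ∈ leafFinset (node ts) ↔ ts = [] := by
  cases ts <;> simp [leafFinset, vertexFinset, subtreeAt, isLeafTree]

theorem cons_mem_leafFinset_node {ts : List RTree} {j : ℕ} {l : List ℕ} :
    j :: l ∈ leafFinset (node ts) ↔ ∃ i : Fin ts.length, ↑i = j ∧ l ∈ leafFinset ts[i] := by
  simp only [leafFinset, mem_filter, cons_mem_vertexFinset_node, subtreeAt]
  constructor
  · rintro ⟨⟨i, rfl, hl⟩, hleaf⟩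
    exact ⟨i, rfl, hl, subtreeAtAux_eq_subtreeAt_getElem ts i l ▸ hleaf⟩
  · rintro ⟨i, rfl, hl, hleaf⟩
    exact ⟨⟨i, rfl, hl⟩, subtreeAtAux_eq_subtreeAt_getElem ts i l ▸ hleaf⟩

theorem mem_prefixFinset {l' l : List ℕ} : l' ∈ prefixFinset l ↔ l' <+: l := by
  simp only [prefixFinset, mem_image, mem_range]
  constructor
  · rintro ⟨k, -, rfl⟩
    exact List.take_prefix k l
  · intro h
    exact ⟨l'.length, Nat.lt_succ_of_le h.length_le, (List.prefix_iff_eq_take.mp h).symm⟩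

theorem prefixFinset_nil : prefixFinset [] = {[]} := rfl

theorem prefixFinset_cons (j : ℕ) (l : List ℕ) :
    prefixFinset (j :: l) = insert [] ((prefixFinset l).image (List.cons j)) := by
  ext l'
  simp [mem_prefixFinset, List.prefix_cons_iff, eq_comm, and_comm]

theorem prefixFinset_subset_vertexFinset {t : RTree} {l : List ℕ} (hl : l ∈ leafFinset t) :
    prefixFinset l ⊆ vertexFinset t :=
  fun _ h ↦ mem_vertexFinset_of_prefix (mem_prefixFinset.mp h) (mem_filter.mp hl).1

/-- The event that a set of kept vertices contains all vertices of some path from the root of `t`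
to a leaf. -/
def openPathEvent (t : RTree) : Set (Set (List ℕ)) :=
  {S | ∃ ℓ ∈ leafFinset t, (prefixFinset ℓ : Set (List ℕ)) ⊆ S}

theorem isDeterminedBy_openPathEvent (t : RTree) :
    IsDeterminedBy (openPathEvent t) (vertexFinset t) := fun S ↦
  exists_congr fun _ ↦ and_congr_right fun hl ↦ by
    rw [Set.subset_inter_iff, coe_subset]
    exact and_iff_left (prefixFinset_subset_vertexFinset hl)

theorem openPathEvent_node_nil : openPathEvent (node []) = {S | [] ∈ S} := by
  ext S
  constructor
  · rintro ⟨l, -, hS⟩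
    exact hS (mem_coe.mpr (mem_prefixFinset.mpr List.nil_prefix))
  · intro hS
    exact ⟨[], nil_mem_leafFinset_node.mpr rfl, by simpa [prefixFinset_nil] using hS⟩

theorem openPathEvent_node {ts : List RTree} (hts : ts ≠ []) :
    openPathEvent (node ts) =
      {S | [] ∈ S} ∩ ⋃ i : Fin ts.length, Set.preimage (List.cons ↑i) ⁻¹' openPathEvent ts[i] := by
  ext S
  have prefixFinset_cons_subset (j : ℕ) (l : List ℕ) :
      (prefixFinset (j :: l) : Set (List ℕ)) ⊆ S ↔
        [] ∈ S ∧ (prefixFinset l : Set (List ℕ)) ⊆ List.cons j ⁻¹' S := by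
    rw [prefixFinset_cons, coe_insert, coe_image, Set.insert_subset_iff, Set.image_subset_iff]
  simp only [Set.mem_inter_iff, Set.mem_iUnion, Set.mem_preimage, openPathEvent, Set.mem_ofPred_eq]
  constructor
  · rintro ⟨_ | ⟨j, l⟩, hl, hS⟩
    · exact absurd (nil_mem_leafFinset_node.mp hl) hts
    · obtain ⟨i, rfl, hi⟩ := cons_mem_leafFinset_node.mp hl
      obtain ⟨root_mem, hS⟩ := (prefixFinset_cons_subset i l).mp hS
      exact ⟨root_mem, i, l, hi, hS⟩
  · rintro ⟨root_mem, i, l, hi, hS⟩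
    exact ⟨i :: l, cons_mem_leafFinset_node.mpr ⟨i, rfl, hi⟩,
      (prefixFinset_cons_subset i l).mpr ⟨root_mem, hS⟩⟩

theorem bernoulliProb_openPathEvent_node {R : Type*} [CommRing R] (q : R) {ts : List RTree}
    (hts : ts ≠ []) :
    bernoulliProb q (vertexFinset (node ts)) (openPathEvent (node ts)) =
      q * (1 - ∏ i : Fin ts.length,
        (1 - bernoulliProb q (vertexFinset ts[i]) (openPathEvent ts[i]))) := by
  let branch (i : Fin ts.length) : Finset (List ℕ) := (vertexFinset ts[i]).image (List.cons ↑i)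
  let blocked (i : Fin ts.length) : Set (Set (List ℕ)) :=
    Set.preimage (List.cons ↑i) ⁻¹' (openPathEvent ts[i])ᶜ
  have blocked_determined : ∀ i ∈ univ, IsDeterminedBy (blocked i) (branch i) := fun i _ ↦ by
    simpa only [branch, coe_image] using
      (isDeterminedBy_openPathEvent ts[i]).compl.preimage_preimage List.cons_injective
  have branch_disjoint : ((univ : Finset (Fin ts.length)) : Set _).PairwiseDisjoint branch := by
    intro i _ j _ hij
    simp [Function.onFun, branch, disjoint_left, Fin.val_inj, hij.symm]
  have root_disjoint : Disjoint {[]} (univ.biUnion branch) := by simp [branch]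
  have event_eq : openPathEvent (node ts) = {S | [] ∈ S} ∩ (⋂ i ∈ univ, blocked i)ᶜ := by
    simp [openPathEvent_node hts, blocked, Set.compl_iInter]
  rw [event_eq, vertexFinset_node, bernoulliProb_union_inter q root_disjoint
      (mod_cast isDeterminedBy_singleton [])
      (IsDeterminedBy.biInter_finset blocked_determined).compl,
    bernoulliProb_singleton, bernoulliProb_compl,
    bernoulliProb_biUnion_iInter q branch_disjoint blocked_determined]
  simp only [branch, blocked, bernoulliProb_image q List.cons_injective, bernoulliProb_compl]

theorem bernoulliProb_openPathEvent {R : Type*} [CommRing R] (q : R) : ∀ t : RTree,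
    bernoulliProb q (vertexFinset t) (openPathEvent t) = aeval q (treePoly t)
  | node ts => by
    obtain rfl | hts := eq_or_ne ts []
    · rw [openPathEvent_node_nil, treePoly, aeval_X]
      simpa [vertexFinset_node] using bernoulliProb_singleton q ([] : List ℕ)
    · have ih (i : Fin ts.length) := bernoulliProb_openPathEvent q ts[i]
      simp only [bernoulliProb_openPathEvent_node q hts, treePoly_node hts, ih, map_mul, map_sub,
        map_one, map_prod, aeval_X]
  termination_by t => sizeOf t
  decreasing_by
    have := List.sizeOf_lt_of_mem (List.getElem_mem i.isLt)
    simp only [Fin.getElem_fin, node.sizeOf_spec]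
    omega

end RTree

open scoped Classical in
theorem stmt6_general {R : Type*} [CommRing R] (t : RTree) (q : R) :
    (∑ A ∈ (RTree.vertexFinset t).powerset,
        if ∃ ℓ ∈ RTree.leafFinset t, RTree.prefixFinset ℓ ⊆ A then
          q ^ A.card * (1 - q) ^ ((RTree.vertexFinset t).card - A.card)
        else 0)
      = Polynomial.aeval q (RTree.treePoly t) := by
  simpa only [bernoulliProb, RTree.openPathEvent, Set.mem_ofPred_eq, Finset.coe_subset]
    using RTree.bernoulliProb_openPathEvent q t

open scoped Classical in
/-- For a rooted tree `𝒯` with vertex set `V` and `q ∈ [0,1]`,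
`Σ_{A ⊆ V, A ⊇ some root-to-leaf path} q^{|A|} (1−q)^{|V|−|A|} = p[𝒯](q)`: if each vertex
is kept independently with probability `q`, the probability that some root-to-leaf path is
entirely kept equals `p[𝒯](q)`. -/
theorem stmt6 (t : RTree) (q : ℝ) (hq : q ∈ Set.Icc (0 : ℝ) 1) :
    (∑ A ∈ (RTree.vertexFinset t).powerset,
        if ∃ ℓ ∈ RTree.leafFinset t, RTree.prefixFinset ℓ ⊆ A then
          q ^ A.card * (1 - q) ^ ((RTree.vertexFinset t).card - A.card)
        else 0)
      = Polynomial.aeval q (RTree.treePoly t) :=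
  stmt6_general t q
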